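/- In a finite MDP with n states, if the initial distribution d0 is not almost-sure weakly synchronizing in T, then for every strategy σ, at most N_w = 2^n distributions in the sequence (M^σ_i) satisfy M^σ_i(T) > 1 − ε_w, where ε_w = α0 · α^{(n+2)·4^n} / n^{2^n + 1}, α is the smallest positive transition probability, and α0 the smallest positive probability in d0. -/

import Mathlib

open scoped BigOperators
open Classical Filter

/-- A finite Markov decision process with real transition probabilities. -/
structure MDP (Q A : Type) [Fintype Q] [Fintype A] where
  δ : Q → A → Q → ℝ
  δ_nonneg : ∀ q a q', 0 ≤ δ q a q'
  δ_sum : ∀ q a, ∑ q', δ q a q' = 1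

namespace MDP

variable {Q A : Type} [Fintype Q] [Fintype A]

/-- `d` is a probability distribution. -/
def IsDist (d : Q → ℝ) : Prop := (∀ q, 0 ≤ d q) ∧ ∑ q, d q = 1

/-- A (randomized, history-dependent) strategy maps a history (list of past
state-action pairs) and the current state to a distribution over actions. -/
def IsStrategy (σ : List (Q × A) → Q → A → ℝ) : Prop :=
  (∀ h q a, 0 ≤ σ h q a) ∧ ∀ h q, ∑ a, σ h q a = 1

/-- The probability of the finite path `qs` (with actions `as`) of length `i`,
under strategy `σ` from initial distribution `d0`. -/
noncomputable def pathProb (M : MDP Q A) (σ : List (Q × A) → Q → A → ℝ)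
    (d0 : Q → ℝ) (i : ℕ) (qs : Fin (i + 1) → Q) (as : Fin i → A) : ℝ :=
  d0 (qs 0) * ∏ j : Fin i,
    (σ (List.ofFn (fun k : Fin j.val =>
          (qs ⟨k.val, by have := k.isLt; have := j.isLt; omega⟩,
           as ⟨k.val, by have := k.isLt; have := j.isLt; omega⟩)))
        (qs j.castSucc) (as j))
      * M.δ (qs j.castSucc) (as j) (qs j.succ)

/-- The distribution over states after `i` steps (`M^σ_i`). -/
noncomputable def stepDist (M : MDP Q A) (σ : List (Q × A) → Q → A → ℝ)
    (d0 : Q → ℝ) (i : ℕ) (q : Q) : ℝ :=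
  ∑ qs : Fin (i + 1) → Q, ∑ as : Fin i → A,
    if qs (Fin.last i) = q then M.pathProb σ d0 i qs as else 0

/-- The probability mass that a (sub)distribution assigns to a set `T`. -/
noncomputable def mass (d : Q → ℝ) (T : Set Q) : ℝ := ∑ q, T.indicator d q

/-- The support of a (sub)distribution. -/
def supp {α : Type} (d : α → ℝ) : Set α := {q | 0 < d q}

/-- One-step sure predecessors of `Y`. -/
def Pre (M : MDP Q A) (Y : Set Q) : Set Q :=
  {q | ∃ a, ∀ q', 0 < M.δ q a q' → q' ∈ Y}

/-- Probability of reaching `T` within `i` steps. -/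
noncomputable def reachProb (M : MDP Q A) (σ : List (Q × A) → Q → A → ℝ)
    (d0 : Q → ℝ) (T : Set Q) (i : ℕ) : ℝ :=
  ∑ qs : Fin (i + 1) → Q, ∑ as : Fin i → A,
    if ∃ j, qs j ∈ T then M.pathProb σ d0 i qs as else 0

/-- `d0` is almost-sure winning for the reachability objective `◇T`:
some strategy reaches `T` with probability one. -/
def ASReach (M : MDP Q A) (d0 : Q → ℝ) (T : Set Q) : Prop :=
  ∃ σ, IsStrategy σ ∧ (⨆ i : ℕ, M.reachProb σ d0 T i) = 1

/-- `d0` is limit-sure eventually synchronizing in `T`. -/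
def LimitSureEventually (M : MDP Q A) (d0 : Q → ℝ) (T : Set Q) : Prop :=
  ∀ ε > (0 : ℝ), ∃ σ, IsStrategy σ ∧ ∃ i, 1 - ε ≤ mass (M.stepDist σ d0 i) T

/-- `d0` is almost-sure weakly synchronizing in `T`. -/
def ASWeakly (M : MDP Q A) (d0 : Q → ℝ) (T : Set Q) : Prop :=
  ∃ σ, IsStrategy σ ∧ ∀ ε > (0 : ℝ), {i : ℕ | 1 - ε ≤ mass (M.stepDist σ d0 i) T}.Infinite

/-- `d0` is almost-sure strongly synchronizing in `T`. -/
def ASStrongly (M : MDP Q A) (d0 : Q → ℝ) (T : Set Q) : Prop :=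
  ∃ σ, IsStrategy σ ∧ ∀ ε > (0 : ℝ), ∃ N, ∀ i ≥ N, 1 - ε ≤ mass (M.stepDist σ d0 i) T

/-- The uniform distribution on a set `S`. -/
noncomputable def uniformOn (S : Set Q) : Q → ℝ :=
  fun q => if q ∈ S then 1 / (S.ncard : ℝ) else 0

/-- The uniform strategy, playing all actions uniformly at random. -/
noncomputable def uniformStrategy (Q A : Type) [Fintype A] :
    List (Q × A) → Q → A → ℝ :=
  fun _ _ _ => 1 / (Fintype.card A : ℝ)

/-- Action `a` is allowed in `q` w.r.t. `S` if all its successors stay in `S`. -/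
def Allowed (M : MDP Q A) (S : Set Q) (q : Q) (a : A) : Prop :=
  ∀ q', 0 < M.δ q a q' → q' ∈ S

/-- Edge relation within `S` given the allowed actions. -/
def ECEdge (M : MDP Q A) (S : Set Q) (q q' : Q) : Prop :=
  q ∈ S ∧ q' ∈ S ∧ ∃ a, M.Allowed S q a ∧ 0 < M.δ q a q'

/-- `S` is an end-component: closed and strongly connected via allowed actions. -/
def IsEC (M : MDP Q A) (S : Set Q) : Prop :=
  (∀ q ∈ S, ∃ a, M.Allowed S q a) ∧
  ∀ q ∈ S, ∀ q' ∈ S, Relation.ReflTransGen (M.ECEdge S) q q'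

/-- The union of all end-components. -/
def ECUnion (M : MDP Q A) : Set Q := ⋃₀ {S | M.IsEC S}

/-- Positive always synchronizing in `T`. -/
def PosAlways (M : MDP Q A) (d0 : Q → ℝ) (T : Set Q) : Prop :=
  ∃ σ, IsStrategy σ ∧ ∀ i, 0 < mass (M.stepDist σ d0 i) T

/-- Positive eventually synchronizing in `T`. -/
def PosEvent (M : MDP Q A) (d0 : Q → ℝ) (T : Set Q) : Prop :=
  ∃ σ, IsStrategy σ ∧ ∃ i, 0 < mass (M.stepDist σ d0 i) T

/-- Positive weakly synchronizing in `T`. -/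
def PosWeakly (M : MDP Q A) (d0 : Q → ℝ) (T : Set Q) : Prop :=
  ∃ σ, IsStrategy σ ∧ ∀ N, ∃ i ≥ N, 0 < mass (M.stepDist σ d0 i) T

/-- Positive strongly synchronizing in `T`. -/
def PosStrongly (M : MDP Q A) (d0 : Q → ℝ) (T : Set Q) : Prop :=
  ∃ σ, IsStrategy σ ∧ ∃ N, ∀ i ≥ N, 0 < mass (M.stepDist σ d0 i) T

/-- Bounded always synchronizing in `T`. -/
def BndAlways (M : MDP Q A) (d0 : Q → ℝ) (T : Set Q) : Prop :=
  ∃ σ, IsStrategy σ ∧ ∃ ε > (0 : ℝ), ∀ i, ε < mass (M.stepDist σ d0 i) T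

/-- Bounded eventually synchronizing in `T`. -/
def BndEvent (M : MDP Q A) (d0 : Q → ℝ) (T : Set Q) : Prop :=
  ∃ σ, IsStrategy σ ∧ ∃ ε > (0 : ℝ), ∃ i, ε < mass (M.stepDist σ d0 i) T

/-- Bounded weakly synchronizing in `T`. -/
def BndWeakly (M : MDP Q A) (d0 : Q → ℝ) (T : Set Q) : Prop :=
  ∃ σ, IsStrategy σ ∧ ∃ ε > (0 : ℝ), ∀ N, ∃ i ≥ N, ε < mass (M.stepDist σ d0 i) T

/-- Bounded strongly synchronizing in `T`. -/
def BndStrongly (M : MDP Q A) (d0 : Q → ℝ) (T : Set Q) : Prop :=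
  ∃ σ, IsStrategy σ ∧ ∃ ε > (0 : ℝ), ∃ N, ∀ i ≥ N, ε < mass (M.stepDist σ d0 i) T

end MDP

/-!
Let `n` be the number of states and `c = α ^ (n * 2 ^ n)`. Suppose that `2 ^ n + 1` distributions
of a play put more than `1 - ε_w` of their mass in `T`. In each of them take the states of
probability above a threshold, where the thresholds decrease geometrically along the play. By the
pigeonhole principle two of them, at times `i < j`, have the same set `S` of such states, and
`S ⊆ T`. Since the play is almost entirely in `S` at time `j`, the least probability `missProb`
of missing `S` is below `c` both after `j` steps from the support of `d0` and after `j - i` steps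
from `S`.

Below `c`, missing probabilities can be made to vanish. Indeed `Pre^[s] S` is eventually periodic
in `s`, with a preperiod `k` and a period `r` such that `k + r ≤ 2 ^ n`. In the product with a
clock modulo `r`, being in `S` after `s` steps therefore becomes plain reachability, where
the least probability of failure from a state is either bounded away from zero, by a power of `α`
as large as `c`, or has infimum zero. So from `d0` and from `S` one can be in `S` at certain later
times with an error as small as one likes, and repeating this with errors tending to zero makes
`d0` almost-sure weakly synchronizing in `T`.
-/

namespace MDP

open scoped Matrix Topology

variable {Q A : Type} [Fintype Q] [Fintype A]

section Distributions

theorem dotProduct_le_dotProduct_of_supp {d φ ψ : Q → ℝ} (hd : 0 ≤ d)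
    (h : ∀ q ∈ supp d, φ q ≤ ψ q) : d ⬝ᵥ φ ≤ d ⬝ᵥ ψ := by
  refine Finset.sum_le_sum fun q _ => ?_
  rcases (hd q).eq_or_lt with h0 | hpos
  · simp [← h0]
  · exact mul_le_mul_of_nonneg_left (h q hpos) hpos.le

theorem mul_le_dotProduct {d φ : Q → ℝ} (hd : 0 ≤ d) (hφ : 0 ≤ φ) (q : Q) :
    d q * φ q ≤ d ⬝ᵥ φ :=
  Finset.single_le_sum (f := fun q => d q * φ q) (fun x _ => mul_nonneg (hd x) (hφ x))
    (Finset.mem_univ q)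

theorem IsDist.dotProduct_const {d : Q → ℝ} (hd : IsDist d) (c : ℝ) :
    d ⬝ᵥ (fun _ => c) = c := by
  simp [dotProduct, ← Finset.sum_mul, hd.2]

theorem IsDist.dotProduct_le {d φ : Q → ℝ} (hd : IsDist d) {c : ℝ}
    (h : ∀ q ∈ supp d, φ q ≤ c) : d ⬝ᵥ φ ≤ c :=
  (dotProduct_le_dotProduct_of_supp hd.1 h).trans_eq (hd.dotProduct_const c)

theorem IsDist.le_dotProduct {d φ : Q → ℝ} (hd : IsDist d) {c : ℝ}
    (h : ∀ q ∈ supp d, c ≤ φ q) : c ≤ d ⬝ᵥ φ :=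
  (hd.dotProduct_const c).symm.trans_le (dotProduct_le_dotProduct_of_supp hd.1 h)

theorem IsDist.eq_of_le_dotProduct {d φ : Q → ℝ} (hd : IsDist d) {c : ℝ}
    (h : ∀ q ∈ supp d, φ q ≤ c) (hc : c ≤ d ⬝ᵥ φ) : ∀ q ∈ supp d, φ q = c := by
  have hgap : ∀ q, 0 ≤ d q * (c - φ q) := fun q => by
    rcases (hd.1 q).eq_or_lt with h0 | hpos
    · simp [← h0]
    · exact mul_nonneg hpos.le (sub_nonneg.2 (h q hpos))
  have hsum : ∑ q, d q * (c - φ q) = 0 := by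
    refine le_antisymm ?_ (Finset.sum_nonneg fun q _ => hgap q)
    have hconst := hd.dotProduct_const c
    simp only [dotProduct] at hconst hc
    simp only [mul_sub, Finset.sum_sub_distrib]
    linarith
  intro q hq
  have hzero := (Finset.sum_eq_zero_iff_of_nonneg fun q _ => hgap q).1 hsum q (Finset.mem_univ q)
  linarith [(mul_eq_zero.1 hzero).resolve_left hq.ne']

theorem mass_eq_dotProduct (d : Q → ℝ) (S : Set Q) : mass d S = d ⬝ᵥ S.indicator 1 := by
  simp [mass, dotProduct, Set.indicator_apply]

theorem IsDist.mass_add_mass_compl {d : Q → ℝ} (hd : IsDist d) (S : Set Q) :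
    mass d S + mass d Sᶜ = 1 := by
  rw [mass_eq_dotProduct, mass_eq_dotProduct, ← dotProduct_add, Set.indicator_self_add_compl]
  exact hd.dotProduct_const 1

theorem mass_mono {d : Q → ℝ} (hd : 0 ≤ d) {S T : Set Q} (hST : S ⊆ T) : mass d S ≤ mass d T :=
  Finset.sum_le_sum fun q _ => Set.indicator_le_indicator_of_subset hST hd q

theorem le_mass_of_mem {d : Q → ℝ} (hd : 0 ≤ d) {S : Set Q} {q : Q} (hq : q ∈ S) :
    d q ≤ mass d S := by
  simpa [mass_eq_dotProduct, hq] using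
    mul_le_dotProduct hd (Set.indicator_nonneg fun _ _ => zero_le_one) q (φ := S.indicator 1)

theorem mass_compl_setOf_le_lt [Nonempty Q] (d : Q → ℝ) {η : ℝ} (hη : 0 < η) :
    mass d {q | η ≤ d q}ᶜ < Fintype.card Q * η := by
  calc mass d {q | η ≤ d q}ᶜ < ∑ _q : Q, η := by
        refine Finset.sum_lt_sum_of_nonempty Finset.univ_nonempty fun q _ => ?_
        by_cases hq : η ≤ d q
        · simpa [hq] using hη
        · simpa [hq] using not_le.1 hq
    _ = Fintype.card Q * η := by simp

end Distributions

section Strategies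

variable (M : MDP Q A)

/-- The history generated by a finite path: its list of state-action pairs, without the
last state. -/
def history {i : ℕ} (qs : Fin (i + 1) → Q) (as : Fin i → A) : List (Q × A) :=
  List.ofFn fun k : Fin i => (qs k.castSucc, as k)

/-- The probability that a play is in state `q` after `i` steps and then takes action `a`. -/
noncomputable def stateActionProb (σ : List (Q × A) → Q → A → ℝ) (d0 : Q → ℝ) (i : ℕ)
    (q : Q) (a : A) : ℝ :=
  ∑ qs : Fin (i + 1) → Q, ∑ as : Fin i → A,
    if qs (Fin.last i) = q then M.pathProb σ d0 i qs as * σ (history qs as) q a else 0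

variable {σ : List (Q × A) → Q → A → ℝ} {d0 : Q → ℝ}

theorem pathProb_succ (σ : List (Q × A) → Q → A → ℝ) (d0 : Q → ℝ) {i : ℕ}
    (qs : Fin (i + 2) → Q) (as : Fin (i + 1) → A) :
    M.pathProb σ d0 (i + 1) qs as = M.pathProb σ d0 i (Fin.init qs) (Fin.init as) *
      (σ (history (Fin.init qs) (Fin.init as)) (qs (Fin.last i).castSucc) (as (Fin.last i)) *
        M.δ (qs (Fin.last i).castSucc) (as (Fin.last i)) (qs (Fin.last (i + 1)))) := by
  rw [pathProb, Fin.prod_univ_castSucc, ← mul_assoc]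
  rfl

theorem sum_fin_succ_fun {X : Type} [Fintype X] {i : ℕ} (F : (Fin (i + 1) → X) → ℝ) :
    ∑ f, F f = ∑ f : Fin i → X, ∑ x, F (Fin.snoc (α := fun _ => X) f x) := by
  rw [← Equiv.sum_comp (Fin.snocEquiv fun _ : Fin (i + 1) => X) F, Fintype.sum_prod_type_right]
  rfl

theorem sum_stateActionProb_mul (σ : List (Q × A) → Q → A → ℝ) (d0 : Q → ℝ) (i : ℕ)
    (x : Q → A → ℝ) :
    ∑ q, ∑ a, M.stateActionProb σ d0 i q a * x q a =
      ∑ qs : Fin (i + 1) → Q, ∑ as : Fin i → A, ∑ a, M.pathProb σ d0 i qs as *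
        (σ (history qs as) (qs (Fin.last i)) a * x (qs (Fin.last i)) a) := by
  simp only [stateActionProb, Finset.sum_mul]
  simp_rw [Finset.sum_comm (s := (Finset.univ : Finset A)),
    Finset.sum_comm (s := (Finset.univ : Finset Q))]
  simp [ite_mul, mul_assoc]

theorem stepDist_zero (σ : List (Q × A) → Q → A → ℝ) (d0 : Q → ℝ) :
    M.stepDist σ d0 0 = d0 := by
  funext q
  have hlast (qs : Fin 0 → Q) (x : Q) : (Fin.snoc (α := fun _ => Q) qs x) 0 = x :=
    Fin.snoc_last (α := fun _ => Q) (n := 0) x qs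
  simp [stepDist, pathProb, sum_fin_succ_fun, hlast]

theorem stepDist_succ (σ : List (Q × A) → Q → A → ℝ) (d0 : Q → ℝ) (i : ℕ) (q' : Q) :
    M.stepDist σ d0 (i + 1) q' =
      ∑ q, ∑ a, M.stateActionProb σ d0 i q a * M.δ q a q' := by
  rw [sum_stateActionProb_mul, stepDist, sum_fin_succ_fun]
  refine Finset.sum_congr rfl fun qs _ => ?_
  rw [Finset.sum_comm, sum_fin_succ_fun]
  refine Finset.sum_congr rfl fun as _ => Finset.sum_congr rfl fun a _ => ?_
  simp [pathProb_succ, Fin.snoc_castSucc (α := fun _ => Q)]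

theorem stepDist_succ_dotProduct (σ : List (Q × A) → Q → A → ℝ) (d0 : Q → ℝ) (i : ℕ)
    (φ : Q → ℝ) :
    M.stepDist σ d0 (i + 1) ⬝ᵥ φ =
      ∑ q, ∑ a, M.stateActionProb σ d0 i q a * (M.δ q a ⬝ᵥ φ) := by
  simp only [dotProduct, stepDist_succ, Finset.sum_mul, Finset.mul_sum, mul_assoc]
  rw [Finset.sum_comm]
  exact Finset.sum_congr rfl fun q _ => Finset.sum_comm

theorem sum_stateActionProb (hσ : IsStrategy σ) (d0 : Q → ℝ) (i : ℕ) (q : Q) :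
    ∑ a, M.stateActionProb σ d0 i q a = M.stepDist σ d0 i q := by
  simp only [stateActionProb, stepDist]
  rw [Finset.sum_comm]
  refine Finset.sum_congr rfl fun qs _ => ?_
  rw [Finset.sum_comm]
  refine Finset.sum_congr rfl fun as _ => ?_
  split_ifs
  · rw [← Finset.mul_sum, hσ.2, mul_one]
  · exact Finset.sum_const_zero

theorem stateActionProb_nonneg (hσ : IsStrategy σ) (hd0 : 0 ≤ d0) (i : ℕ) (q : Q) (a : A) :
    0 ≤ M.stateActionProb σ d0 i q a := by
  refine Finset.sum_nonneg fun qs _ => Finset.sum_nonneg fun as _ => ?_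
  split_ifs
  · exact mul_nonneg (mul_nonneg (hd0 _) (Finset.prod_nonneg fun _ _ =>
      mul_nonneg (hσ.1 _ _ _) (M.δ_nonneg _ _ _))) (hσ.1 _ _ _)
  · exact le_rfl

theorem isDist_δ (q : Q) (a : A) : IsDist (M.δ q a) := ⟨M.δ_nonneg q a, M.δ_sum q a⟩

theorem isDist_stepDist (hσ : IsStrategy σ) (hd0 : IsDist d0) (i : ℕ) :
    IsDist (M.stepDist σ d0 i) := by
  induction i with
  | zero => rwa [stepDist_zero]
  | succ i ih =>
    refine ⟨fun q' => ?_, ?_⟩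
    · rw [stepDist_succ]
      exact Finset.sum_nonneg fun q _ => Finset.sum_nonneg fun a _ =>
        mul_nonneg (M.stateActionProb_nonneg hσ hd0.1 i q a) (M.δ_nonneg q a q')
    · have hone := M.stepDist_succ_dotProduct σ d0 i fun _ => 1
      simp only [(M.isDist_δ _ _).dotProduct_const, mul_one, M.sum_stateActionProb hσ, ih.2]
        at hone
      simpa [dotProduct] using hone

end Strategies

section Policies

variable (M : MDP Q A)

/-- The transition matrix of the Markov chain obtained by playing action `p q` in state `q`. -/
def transMatrix (p : Q → A) : Matrix Q Q ℝ := .of fun q => M.δ q (p q)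

/-- The distribution after `i` steps from `d` under the pure Markov policy `π`, which plays
action `π t q` when it is in state `q` at time `t`. -/
def run (π : ℕ → Q → A) (d : Q → ℝ) : ℕ → Q → ℝ
  | 0 => d
  | i + 1 => run π d i ᵥ* M.transMatrix (π i)

/-- The pure Markov policy `π` as a strategy: the length of the history is the current time. -/
noncomputable def pureStrategy (π : ℕ → Q → A) (h : List (Q × A)) (q : Q) (a : A) : ℝ :=
  if a = π h.length q then 1 else 0

theorem isStrategy_pureStrategy {Q A : Type} [Fintype A] (π : ℕ → Q → A) :
    IsStrategy (pureStrategy π) :=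
  ⟨fun h q a => by unfold pureStrategy; split_ifs <;> simp, fun h q => by simp [pureStrategy]⟩

theorem stateActionProb_pureStrategy (π : ℕ → Q → A) (d0 : Q → ℝ) (i : ℕ) (q : Q) (a : A) :
    M.stateActionProb (pureStrategy π) d0 i q a =
      if a = π i q then M.stepDist (pureStrategy π) d0 i q else 0 := by
  split_ifs with ha <;> simp [stateActionProb, stepDist, pureStrategy, history, ha]

theorem stepDist_pureStrategy (π : ℕ → Q → A) (d0 : Q → ℝ) (i : ℕ) :
    M.stepDist (pureStrategy π) d0 i = M.run π d0 i := by
  induction i with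
  | zero => exact M.stepDist_zero _ _
  | succ i ih =>
    funext q'
    simp [stepDist_succ, stateActionProb_pureStrategy, ih, run, Matrix.vecMul, dotProduct,
      transMatrix]

theorem run_congr {π ρ : ℕ → Q → A} (d : Q → ℝ) {i : ℕ} (h : ∀ t < i, π t = ρ t) :
    M.run π d i = M.run ρ d i := by
  induction i with
  | zero => rfl
  | succ i ih => rw [run, run, ih fun t ht => h t (ht.trans i.lt_succ_self), h i i.lt_succ_self]

theorem exists_run_add (π π' : ℕ → Q → A) (d : Q → ℝ) (n m : ℕ) :
    ∃ ρ : ℕ → Q → A, (∀ t < n, ρ t = π t) ∧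
      M.run ρ d (n + m) = M.run π' (M.run π d n) m := by
  refine ⟨fun t => if t < n then π t else π' (t - n), fun t ht => if_pos ht, ?_⟩
  induction m with
  | zero => exact M.run_congr d fun t ht => if_pos ht
  | succ m ih => simp [run, ih]

/-- Some pure Markov policy leads from the distribution `d` to `d'` in exactly `n` steps. -/
def CanReach (n : ℕ) (d d' : Q → ℝ) : Prop := ∃ π, M.run π d n = d'

variable {M}

theorem CanReach.refl [Nonempty A] (d : Q → ℝ) : M.CanReach 0 d d :=
  ⟨fun _ _ => Classical.arbitrary A, rfl⟩

theorem CanReach.trans {n m : ℕ} {d₁ d₂ d₃ : Q → ℝ} (h₁ : M.CanReach n d₁ d₂)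
    (h₂ : M.CanReach m d₂ d₃) : M.CanReach (n + m) d₁ d₃ := by
  obtain ⟨π, rfl⟩ := h₁
  obtain ⟨π', rfl⟩ := h₂
  obtain ⟨ρ, -, hρ⟩ := M.exists_run_add π π' d₁ n m
  exact ⟨ρ, hρ⟩

theorem canReach_one (d : Q → ℝ) (p : Q → A) : M.CanReach 1 d (d ᵥ* M.transMatrix p) :=
  ⟨fun _ => p, rfl⟩

theorem IsDist.vecMul_transMatrix {d : Q → ℝ} (hd : IsDist d) (p : Q → A) :
    IsDist (d ᵥ* M.transMatrix p) := by
  refine ⟨fun q' => Finset.sum_nonneg fun q _ => mul_nonneg (hd.1 q) (M.δ_nonneg _ _ _), ?_⟩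
  have hrows : M.transMatrix p *ᵥ 1 = 1 := funext fun q => (M.isDist_δ q (p q)).dotProduct_const 1
  rw [← dotProduct_one, ← Matrix.dotProduct_mulVec, hrows]
  exact hd.dotProduct_const 1

theorem supp_vecMul_transMatrix_subset {d : Q → ℝ} (hd : 0 ≤ d) {p : Q → A} {S : Set Q}
    (h : ∀ q ∈ supp d, M.Allowed S q (p q)) : supp (d ᵥ* M.transMatrix p) ⊆ S := by
  intro q' hq'
  have hsum : ∑ _q : Q, (0 : ℝ) < ∑ q, d q * M.δ q (p q) q' := Finset.sum_const_zero.trans_lt hq'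
  obtain ⟨q, -, hq⟩ := Finset.exists_lt_of_sum_lt hsum
  have hdq : d q ≠ 0 := left_ne_zero_of_mul hq.ne'
  have hpos : 0 < d q := lt_of_le_of_ne (hd q) hdq.symm
  exact h q hpos q' (pos_of_mul_pos_right hq hpos.le)

theorem exists_limit_of_prefixes {X : Type} {N : ℕ → ℕ} (hN : StrictMono N) (x : ℕ → ℕ → X)
    (h : ∀ k, ∀ i < N k, x (k + 1) i = x k i) : ∃ y : ℕ → X, ∀ k, ∀ i < N k, y i = x k i := by
  have hstable : ∀ {k l}, k ≤ l → ∀ i < N k, x l i = x k i := fun {k l} hkl => by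
    induction l, hkl using Nat.le_induction with
    | base => exact fun _ _ => rfl
    | succ l hkl ih => exact fun i hi =>
        (h l i (hi.trans_le (hN.monotone hkl))).trans (ih i hi)
  refine ⟨fun i => x (i + 1) i, fun k i hi => ?_⟩
  rcases le_total k (i + 1) with hle | hle
  · exact hstable hle i hi
  · exact (hstable hle i (Nat.lt_of_succ_le (hN.id_le _))).symm

variable [Nonempty A]

theorem asWeakly_of_forall_canReach {T : Set Q} {d0 : Q → ℝ} (I : (Q → ℝ) → Prop) (h0 : I d0)
    (hI : ∀ d, I d → ∀ ε > 0, ∃ n > 0, ∃ d', M.CanReach n d d' ∧ I d' ∧ 1 - ε ≤ mass d' T) :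
    M.ASWeakly d0 T := by
  let Prefix := {x : ℕ × (ℕ → Q → A) // I (M.run x.2 d0 x.1)}
  have hext : ∀ (k : ℕ) (x : Prefix), ∃ y : Prefix, x.1.1 < y.1.1 ∧
      (∀ t < x.1.1, y.1.2 t = x.1.2 t) ∧ 1 - 1 / (k + 1 : ℝ) ≤ mass (M.run y.1.2 d0 y.1.1) T := by
    rintro k ⟨⟨N, π⟩, hx⟩
    obtain ⟨n, hn, d', ⟨π', rfl⟩, hd', hmass⟩ := hI _ hx (1 / (k + 1)) Nat.one_div_pos_of_nat
    obtain ⟨ρ, hpre, hrun⟩ := M.exists_run_add π π' d0 N n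
    rw [← hrun] at hd' hmass
    exact ⟨⟨(N + n, ρ), hd'⟩, Nat.lt_add_of_pos_right hn, hpre, hmass⟩
  choose next hlt hpre hmass using hext
  let S : ℕ → Prefix := fun k => k.rec ⟨(0, fun _ _ => Classical.arbitrary A), h0⟩ next
  have hN : StrictMono fun k => (S k).1.1 := strictMono_nat_of_lt_succ fun k => hlt k (S k)
  obtain ⟨π, hπ⟩ := exists_limit_of_prefixes hN (fun k => (S k).1.2) fun k => hpre k (S k)
  refine ⟨pureStrategy π, isStrategy_pureStrategy π, fun ε hε => ?_⟩
  obtain ⟨K, hK⟩ := exists_nat_one_div_lt hε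
  refine Set.infinite_of_forall_exists_gt fun m => ⟨(S (m + K + 1)).1.1, ?_, ?_⟩
  · have hε' : 1 / ((m + K : ℕ) + 1 : ℝ) ≤ 1 / (K + 1) :=
      Nat.one_div_le_one_div (Nat.le_add_left K m)
    rw [Set.mem_ofPred_eq, stepDist_pureStrategy, M.run_congr d0 (hπ (m + K + 1))]
    exact (by linarith : 1 - ε ≤ 1 - 1 / ((m + K : ℕ) + 1 : ℝ)).trans (hmass (m + K) (S (m + K)))
  · exact (by omega : m < m + K + 1).trans_le (hN.id_le (m + K + 1))

end Policies

section MissProb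

/-- `α ∈ (0, 1]` bounds the positive transition probabilities of `M` from below. -/
structure IsTransBound (M : MDP Q A) (α : ℝ) : Prop where
  pos : 0 < α
  le_one : α ≤ 1
  le_δ : ∀ {q a x}, 0 < M.δ q a x → α ≤ M.δ q a x

/-- The least probability of being outside `R` after `s` steps from `q`, over all ways of
playing actions that surely stay in `W`. The infimum takes the junk value `0` in states without
such an action. -/
noncomputable def missProb (M : MDP Q A) (W R : Set Q) : ℕ → Q → ℝ
  | 0 => Rᶜ.indicator 1
  | s + 1 => fun q => ⨅ a : {a // M.Allowed W q a}, M.δ q a ⬝ᵥ missProb M W R s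

variable {M : MDP Q A} {V W R S : Set Q} {q : Q} {a : A} {s m n : ℕ} {c α : ℝ}

theorem missProb_zero_of_mem (hq : q ∈ R) : M.missProb W R 0 q = 0 :=
  Set.indicator_of_notMem (not_not.2 hq) 1

theorem missProb_zero_of_notMem (hq : q ∉ R) : M.missProb W R 0 q = 1 :=
  Set.indicator_of_mem hq 1

theorem missProb_succ_le (ha : M.Allowed W q a) :
    M.missProb W R (s + 1) q ≤ M.δ q a ⬝ᵥ M.missProb W R s :=
  ciInf_le (f := fun a : {a // M.Allowed W q a} => M.δ q a ⬝ᵥ M.missProb W R s)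
    (Set.finite_range _).bddBelow ⟨a, ha⟩

theorem exists_missProb_succ_eq (hq : q ∈ M.Pre W) :
    ∃ a, M.Allowed W q a ∧ M.missProb W R (s + 1) q = M.δ q a ⬝ᵥ M.missProb W R s := by
  obtain ⟨a, ha⟩ := hq
  have : Nonempty {a // M.Allowed W q a} := ⟨a, ha⟩
  obtain ⟨b, hb⟩ := exists_eq_ciInf_of_finite
    (f := fun a : {a // M.Allowed W q a} => M.δ q a ⬝ᵥ M.missProb W R s)
  exact ⟨b, b.2, hb.symm⟩

theorem missProb_nonneg (q : Q) : 0 ≤ M.missProb W R s q := by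
  induction s generalizing q with
  | zero => exact Set.indicator_nonneg (fun _ _ => zero_le_one) q
  | succ s ih =>
    exact Real.iInf_nonneg fun a => (M.isDist_δ q a).le_dotProduct fun q' _ => ih q'

theorem missProb_le_one (hW : W ⊆ M.Pre W) (hq : q ∈ W) : M.missProb W R s q ≤ 1 := by
  induction s generalizing q with
  | zero => exact Set.indicator_le_self' (fun _ _ => zero_le_one) q
  | succ s ih =>
    obtain ⟨a, ha⟩ := hW hq
    exact (missProb_succ_le ha).trans ((M.isDist_δ q a).dotProduct_le fun q' hq' => ih (ha q' hq'))

theorem missProb_anti (hVW : V ⊆ W) (hV : V ⊆ M.Pre V) (hq : q ∈ V) :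
    M.missProb W R s q ≤ M.missProb V R s q := by
  induction s generalizing q with
  | zero => exact le_rfl
  | succ s ih =>
    obtain ⟨a, ha, heq⟩ := exists_missProb_succ_eq (R := R) (s := s) (hV hq)
    rw [heq]
    exact (missProb_succ_le fun q' hq' => hVW (ha q' hq')).trans
      (dotProduct_le_dotProduct_of_supp (M.δ_nonneg q a) fun q' hq' => ih (ha q' hq'))

theorem missProb_add_le (hW : W ⊆ M.Pre W) (hc : 0 ≤ c)
    (hR : ∀ q ∈ R, q ∈ W → M.missProb W S n q ≤ c) (hq : q ∈ W) :
    M.missProb W S (m + n) q ≤ M.missProb W R m q + c := by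
  induction m generalizing q with
  | zero =>
    rw [Nat.zero_add]
    by_cases hqR : q ∈ R
    · simpa [missProb_zero_of_mem hqR] using hR q hqR hq
    · rw [missProb_zero_of_notMem hqR]
      linarith [missProb_le_one (R := S) (s := n) hW hq]
  | succ m ih =>
    obtain ⟨a, ha, heq⟩ := exists_missProb_succ_eq (R := R) (s := m) (hW hq)
    rw [heq, ← (M.isDist_δ q a).dotProduct_const c, ← dotProduct_add, Nat.add_right_comm]
    exact (missProb_succ_le ha).trans
      (dotProduct_le_dotProduct_of_supp (M.δ_nonneg q a) fun q' hq' => ih (ha q' hq'))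

theorem mul_missProb_le (hW : W ⊆ M.Pre W) (hc : 0 ≤ c)
    (hR : ∀ q ∉ R, q ∈ W → c ≤ M.missProb W S n q) (hq : q ∈ W) :
    c * M.missProb W R m q ≤ M.missProb W S (m + n) q := by
  induction m generalizing q with
  | zero =>
    rw [Nat.zero_add]
    by_cases hqR : q ∈ R
    · simpa [missProb_zero_of_mem hqR] using missProb_nonneg q
    · simpa [missProb_zero_of_notMem hqR] using hR q hqR hq
  | succ m ih =>
    obtain ⟨a, ha, heq⟩ := exists_missProb_succ_eq (R := S) (s := m + n) (hW hq)
    rw [Nat.add_right_comm, heq]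
    calc c * M.missProb W R (m + 1) q ≤ c * (M.δ q a ⬝ᵥ M.missProb W R m) :=
          mul_le_mul_of_nonneg_left (missProb_succ_le ha) hc
      _ = M.δ q a ⬝ᵥ (c • M.missProb W R m) := by rw [dotProduct_smul, smul_eq_mul]
      _ ≤ M.δ q a ⬝ᵥ M.missProb W S (m + n) :=
          dotProduct_le_dotProduct_of_supp (M.δ_nonneg q a) fun q' hq' => ih (ha q' hq')

theorem missProb_univ_eq_zero (hq : q ∈ M.Pre^[s] S) : M.missProb Set.univ S s q = 0 := by
  refine le_antisymm ?_ (missProb_nonneg q)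
  induction s generalizing q with
  | zero => exact (missProb_zero_of_mem hq).le
  | succ s ih =>
    rw [Function.iterate_succ_apply'] at hq
    obtain ⟨a, ha⟩ := hq
    exact (missProb_succ_le fun _ _ => Set.mem_univ _).trans
      ((M.isDist_δ q a).dotProduct_le fun q' hq' => ih (ha q' hq'))

theorem stepDist_dotProduct_missProb_le {σ : List (Q × A) → Q → A → ℝ} {d0 : Q → ℝ}
    (hσ : IsStrategy σ) (hd0 : 0 ≤ d0) (i m : ℕ) :
    M.stepDist σ d0 i ⬝ᵥ M.missProb Set.univ S m ≤ mass (M.stepDist σ d0 (i + m)) Sᶜ := by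
  induction m generalizing i with
  | zero => exact (mass_eq_dotProduct _ _).ge
  | succ m ih =>
    rw [← Nat.add_assoc, Nat.add_right_comm]
    refine le_trans ?_ (ih (i + 1))
    rw [stepDist_succ_dotProduct, dotProduct]
    refine Finset.sum_le_sum fun q _ => ?_
    rw [← M.sum_stateActionProb hσ, Finset.sum_mul]
    exact Finset.sum_le_sum fun a _ => mul_le_mul_of_nonneg_left
      (missProb_succ_le fun _ _ => Set.mem_univ _) (M.stateActionProb_nonneg hσ hd0 i q a)

variable [Nonempty A]

theorem subset_pre_univ : W ⊆ M.Pre Set.univ :=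
  fun _ _ => ⟨Classical.arbitrary A, fun _ _ => Set.mem_univ _⟩

theorem IsTransBound.pow_le_missProb_univ (hα : M.IsTransBound α) (hq : q ∉ M.Pre^[s] S) :
    α ^ s ≤ M.missProb Set.univ S s q := by
  induction s generalizing q with
  | zero => exact (pow_zero α).trans_le (missProb_zero_of_notMem hq).ge
  | succ s ih =>
    obtain ⟨a, -, heq⟩ :=
      exists_missProb_succ_eq (R := S) (s := s) (subset_pre_univ (M := M) (Set.mem_univ q))
    have hescape : ∃ q', 0 < M.δ q a q' ∧ q' ∉ M.Pre^[s] S := by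
      by_contra! hall
      exact hq (Function.iterate_succ_apply' M.Pre s S ▸ ⟨a, hall⟩)
    obtain ⟨q', hpos, hq'⟩ := hescape
    calc α ^ (s + 1) = α * α ^ s := pow_succ' α s
      _ ≤ M.δ q a q' * M.missProb Set.univ S s q' :=
        mul_le_mul (hα.le_δ hpos) (ih hq') (pow_nonneg hα.pos.le s) hpos.le
      _ ≤ M.missProb Set.univ S (s + 1) q :=
        heq ▸ mul_le_dotProduct (M.δ_nonneg q a) missProb_nonneg q'

end MissProb

section Reachability

variable {M : MDP Q A} {R U W X : Set Q} {q : Q} {a : A} {c α : ℝ}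

theorem missProb_eq_zero_of_subset_pre (hR : R ⊆ M.Pre R) (hRW : R ⊆ W) (s : ℕ) (hq : q ∈ R) :
    M.missProb W R s q = 0 := by
  refine le_antisymm ?_ (missProb_nonneg q)
  induction s generalizing q with
  | zero => exact (missProb_zero_of_mem hq).le
  | succ s ih =>
    obtain ⟨a, ha⟩ := hR hq
    exact (missProb_succ_le fun q' hq' => hRW (ha q' hq')).trans
      ((M.isDist_δ q a).dotProduct_le fun q' hq' => ih (ha q' hq'))

theorem antitone_missProb (hR : R ⊆ M.Pre R) (hRW : R ⊆ W) (hW : W ⊆ M.Pre W) (hq : q ∈ W) :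
    Antitone fun s => M.missProb W R s q :=
  antitone_nat_of_succ_le fun _ =>
    (missProb_add_le hW le_rfl
      (fun _ hq' _ => (missProb_eq_zero_of_subset_pre hR hRW 1 hq').le) hq).trans_eq (add_zero _)

/-- The least probability of never reaching `R`, when actions must surely stay in `W`; it is the
limit of `M.missProb W R` when `R` is a set in which one can surely stay. -/
noncomputable def limMissProb (M : MDP Q A) (W R : Set Q) (q : Q) : ℝ :=
  ⨅ s, M.missProb W R s q

theorem limMissProb_le (s : ℕ) : M.limMissProb W R q ≤ M.missProb W R s q :=
  ciInf_le ⟨0, Set.forall_mem_range.2 fun _ => missProb_nonneg q⟩ s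

theorem tendsto_missProb (hR : R ⊆ M.Pre R) (hRW : R ⊆ W) (hW : W ⊆ M.Pre W) (hq : q ∈ W) :
    Tendsto (fun s => M.missProb W R s q) atTop (𝓝 (M.limMissProb W R q)) :=
  tendsto_atTop_ciInf (antitone_missProb hR hRW hW hq)
    ⟨0, Set.forall_mem_range.2 fun _ => missProb_nonneg q⟩

theorem limMissProb_le_dotProduct (hR : R ⊆ M.Pre R) (hRW : R ⊆ W) (hW : W ⊆ M.Pre W)
    (ha : M.Allowed W q a) : M.limMissProb W R q ≤ M.δ q a ⬝ᵥ M.limMissProb W R := by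
  have hlim : Tendsto (fun s => M.δ q a ⬝ᵥ M.missProb W R s) atTop
      (𝓝 (M.δ q a ⬝ᵥ M.limMissProb W R)) := by
    refine tendsto_finsetSum _ fun q' _ => ?_
    rcases (M.δ_nonneg q a q').eq_or_lt with h0 | hpos
    · simp [← h0]
    · exact (tendsto_missProb hR hRW hW (ha q' hpos)).const_mul _
  exact ge_of_tendsto' hlim fun s => (limMissProb_le (s + 1)).trans (missProb_succ_le ha)

theorem limMissProb_eq_zero (hR : R ⊆ M.Pre R) (hRW : R ⊆ W) (hW : W ⊆ M.Pre W)
    (htrap : ∀ X ⊆ W, Disjoint X R → (∀ q ∈ X, ∀ a, M.Allowed W q a → M.Allowed X q a) → X = ∅)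
    (hq : q ∈ W) : M.limMissProb W R q = 0 := by
  by_contra hne
  have hnonneg (q : Q) : 0 ≤ M.limMissProb W R q := Real.iInf_nonneg fun _ => missProb_nonneg q
  obtain ⟨m, hmW, hmax⟩ := W.toFinite.exists_maximalFor (M.limMissProb W R) W ⟨q, hq⟩
  replace hmax (q' : Q) (hq' : q' ∈ W) : M.limMissProb W R q' ≤ M.limMissProb W R m :=
    (le_total _ _).elim id (hmax hq')
  have hpos : 0 < M.limMissProb W R m :=
    (lt_of_le_of_ne (hnonneg q) (Ne.symm hne)).trans_le (hmax q hq)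
  -- By averaging, every action played in a maximizer of the limit leads to maximizers only.
  let X : Set Q := {x | x ∈ W ∧ M.limMissProb W R x = M.limMissProb W R m}
  refine (htrap X (fun x hx => hx.1) ?_ ?_).subset (⟨hmW, rfl⟩ : m ∈ X)
  · refine Set.disjoint_left.2 fun x hx hxR => hpos.not_ge ?_
    exact hx.2 ▸ (limMissProb_le 0).trans_eq (missProb_zero_of_mem hxR)
  · intro x hx a ha x' hx'
    have hmean := hx.2.symm.trans_le (limMissProb_le_dotProduct hR hRW hW ha)
    exact ⟨ha x' hx', (M.isDist_δ x a).eq_of_le_dotProduct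
      (fun y hy => hmax y (ha y hy)) hmean x' hx'⟩

variable [Nonempty A]

theorem IsTransBound.mul_le_missProb_of_trap (hα : M.IsTransBound α) (hc : 0 ≤ c) (hc1 : c ≤ 1)
    (hU : ∀ q ∈ U, ∀ s, c ≤ M.missProb Set.univ R s q) (hXR : Disjoint X R)
    (hX : ∀ q ∈ X, ∀ a, M.Allowed Uᶜ q a → M.Allowed X q a) (hq : q ∈ X) (s : ℕ) :
    α * c ≤ M.missProb Set.univ R s q := by
  induction s generalizing q with
  | zero =>
    rw [missProb_zero_of_notMem (hXR.notMem_of_mem_left hq)]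
    exact mul_le_one₀ hα.le_one hc hc1
  | succ s ih =>
    obtain ⟨a, -, heq⟩ :=
      exists_missProb_succ_eq (R := R) (s := s) (subset_pre_univ (M := M) (Set.mem_univ q))
    rw [heq]
    by_cases ha : M.Allowed Uᶜ q a
    · exact (M.isDist_δ q a).le_dotProduct fun q' hq' => ih (hX q hq a ha q' hq')
    · obtain ⟨q', hpos, hq'⟩ : ∃ q', 0 < M.δ q a q' ∧ q' ∈ U := by
        simpa [Allowed] using ha
      exact (mul_le_mul (hα.le_δ hpos) (hU q' hq' s) hc hpos.le).trans
        (mul_le_dotProduct (M.δ_nonneg q a) missProb_nonneg q')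

theorem IsTransBound.exists_maximal_trap (hα : M.IsTransBound α) (R : Set Q) :
    ∃ U : Set Q, (∀ q ∈ U, ∀ s, α ^ Fintype.card Q ≤ M.missProb Set.univ R s q) ∧
      ∀ X, Disjoint X R → (∀ q ∈ X, ∀ a, M.Allowed Uᶜ q a → M.Allowed X q a) → X ⊆ U := by
  let Bounded (U : Set Q) : Prop := ∀ q ∈ U, ∀ s, α ^ U.ncard ≤ M.missProb Set.univ R s q
  have hempty : Bounded ∅ := fun _ hq => hq.elim
  obtain ⟨U, hU⟩ := (Set.toFinite {U | Bounded U}).exists_maximal ⟨∅, hempty⟩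
  refine ⟨U, fun q hq s => ?_, fun X hXR hX => ?_⟩
  · refine (pow_le_pow_of_le_one hα.pos.le hα.le_one ?_).trans (hU.prop q hq s)
    exact Nat.card_eq_fintype_card (α := Q) ▸ Set.ncard_le_card U
  by_contra hXU
  have hcard : U.ncard + 1 ≤ (U ∪ X).ncard := Set.ncard_lt_ncard
    ⟨Set.subset_union_left, fun hsub => hXU (Set.subset_union_right.trans hsub)⟩
  have hpow : α ^ (U ∪ X).ncard ≤ α * α ^ U.ncard :=
    (pow_le_pow_of_le_one hα.pos.le hα.le_one hcard).trans_eq (pow_succ' _ _)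
  have hbounded : Bounded (U ∪ X) := by
    rintro q (hq | hq) s
    · exact (pow_le_pow_of_le_one hα.pos.le hα.le_one (Nat.le_of_succ_le hcard)).trans
        (hU.prop q hq s)
    · exact hpow.trans (hα.mul_le_missProb_of_trap (pow_nonneg hα.pos.le _)
        (pow_le_one₀ hα.pos.le hα.le_one) hU.prop hXR hX hq s)
  exact hXU (Set.subset_union_right.trans (hU.le_of_ge hbounded Set.subset_union_left))

theorem IsTransBound.exists_reach_region (hα : M.IsTransBound α) (hR : R ⊆ M.Pre R) :
    ∃ W : Set Q, W ⊆ M.Pre W ∧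
      (∀ q ∉ W, ∀ s, α ^ Fintype.card Q ≤ M.missProb Set.univ R s q) ∧
      ∀ q ∈ W, Tendsto (fun s => M.missProb W R s q) atTop (𝓝 0) := by
  obtain ⟨U, hU, htrap⟩ := hα.exists_maximal_trap R
  have hRU : R ⊆ Uᶜ := fun q hq hqU => by
    have hle := hU q hqU 0
    rw [missProb_zero_of_mem hq] at hle
    exact hle.not_gt (pow_pos hα.pos _)
  have hstay : Uᶜ ⊆ M.Pre Uᶜ := by
    intro q hqU
    by_contra hpre
    have hqR : q ∉ R := fun hqR => hpre ((hR hqR).imp fun a ha q' hq' => hRU (ha q' hq'))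
    refine hqU (htrap {q} (Set.disjoint_singleton_left.2 hqR) ?_ rfl)
    rintro _ rfl a ha
    exact absurd ⟨a, ha⟩ hpre
  refine ⟨Uᶜ, hstay, fun q hq => hU q (not_not.1 hq), fun q hq => ?_⟩
  rw [← limMissProb_eq_zero hR hRU hstay ?_ hq]
  · exact tendsto_missProb hR hRU hstay hq
  · intro X hXU hXR hX
    exact Set.subset_empty_iff.1 fun x hx => hXU hx (htrap X hXR hX hx)

end Reachability

section Clock

variable {M : MDP Q A} {r : ℕ} [NeZero r] {W R : Set (Q × ZMod r)} {q : Q} {a : A} {t : ZMod r}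
  {α : ℝ}

/-- The product of `M` with a clock modulo `r` which every transition decreases by one. -/
noncomputable def clock (M : MDP Q A) (r : ℕ) [NeZero r] : MDP (Q × ZMod r) A where
  δ x a y := if y.2 + 1 = x.2 then M.δ x.1 a y.1 else 0
  δ_nonneg x a y := by
    split_ifs
    exacts [M.δ_nonneg _ _ _, le_rfl]
  δ_sum x a := by
    simp [Fintype.sum_prod_type, ← eq_sub_iff_add_eq, M.δ_sum]

theorem clock_δ_dotProduct (φ : Q × ZMod r → ℝ) :
    (M.clock r).δ (q, t + 1) a ⬝ᵥ φ = M.δ q a ⬝ᵥ fun q' => φ (q', t) := by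
  simp [clock, dotProduct, Fintype.sum_prod_type]

theorem allowed_clock :
    (M.clock r).Allowed W (q, t + 1) a ↔ M.Allowed ((·, t) ⁻¹' W) q a := by
  refine ⟨fun h q' hq' => h (q', t) (by simpa [clock] using hq'), ?_⟩
  rintro h ⟨q', u⟩ hpos
  obtain rfl : u = t := by
    by_contra hne
    simp [clock, hne] at hpos
  exact h q' (by simpa [clock] using hpos)

theorem mem_pre_clock : (q, t + 1) ∈ (M.clock r).Pre W ↔ q ∈ M.Pre ((·, t) ⁻¹' W) :=
  exists_congr fun _ => allowed_clock

theorem IsTransBound.clock (hα : M.IsTransBound α) : (M.clock r).IsTransBound α where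
  pos := hα.pos
  le_one := hα.le_one
  le_δ {x a y} h := by
    simp only [MDP.clock] at h ⊢
    split_ifs at h ⊢
    exacts [hα.le_δ h, (lt_irrefl _ h).elim]

theorem missProb_clock_univ (s : ℕ) (q : Q) (t : ZMod r) :
    (M.clock r).missProb Set.univ R s (q, s + t) = M.missProb Set.univ ((·, t) ⁻¹' R) s q := by
  induction s generalizing q with
  | zero => exact congrArg (Rᶜ.indicator 1) (by simp)
  | succ s ih =>
    rw [Nat.cast_succ, add_right_comm]
    refine (Equiv.subtypeEquivRight fun a => allowed_clock).iInf_congr fun a => ?_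
    rw [clock_δ_dotProduct]
    exact congrArg _ (funext fun q' => (ih q').symm)

end Clock

section Certificates

variable {M : MDP Q A} [Nonempty A]

theorem exists_canReach_of_certificate {D : ℕ → Set Q} {γ : ℕ → Q → ℝ}
    (h : ∀ s, ∀ q ∈ D (s + 1), ∃ a, M.Allowed (D s) q a ∧ M.δ q a ⬝ᵥ γ s ≤ γ (s + 1) q)
    (n : ℕ) {d : Q → ℝ} (hd : IsDist d) (hdn : supp d ⊆ D n) :
    ∃ d', M.CanReach n d d' ∧ IsDist d' ∧ supp d' ⊆ D 0 ∧ d' ⬝ᵥ γ 0 ≤ d ⬝ᵥ γ n := by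
  induction n generalizing d with
  | zero => exact ⟨d, .refl d, hd, hdn, le_rfl⟩
  | succ n ih =>
    choose! p hp using h n
    obtain ⟨d', hreach, hd', hsupp, hle⟩ := ih (hd.vecMul_transMatrix (M := M) p)
      (supp_vecMul_transMatrix_subset hd.1 fun q hq => (hp q (hdn hq)).1)
    refine ⟨d', Nat.add_comm 1 n ▸ (canReach_one d p).trans hreach, hd', hsupp, hle.trans ?_⟩
    rw [← Matrix.dotProduct_mulVec]
    exact dotProduct_le_dotProduct_of_supp hd.1 fun q hq => (hp q (hdn hq)).2

end Certificates

section SyncRegion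

theorem exists_lt_map_eq_of_card_lt {ι X : Type} [LinearOrder ι] [Fintype ι] [Fintype X]
    (f : ι → X) (h : Fintype.card X < Fintype.card ι) : ∃ i j, i < j ∧ f i = f j := by
  obtain ⟨i, j, hne, heq⟩ := Fintype.exists_ne_map_eq_of_card_lt f h
  rcases hne.lt_or_gt with hlt | hlt
  exacts [⟨i, j, hlt, heq⟩, ⟨j, i, hlt, heq.symm⟩]

theorem exists_isPeriodicPt_iterate {X : Type} [Fintype X] (f : X → X) (x : X) :
    ∃ k r, 0 < r ∧ k + r ≤ Fintype.card X ∧ Function.IsPeriodicPt f r (f^[k] x) := by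
  obtain ⟨i, j, hlt, heq⟩ := exists_lt_map_eq_of_card_lt
    (fun i : Fin (Fintype.card X + 1) => f^[i] x) (by simp)
  refine ⟨i, j - i, Nat.sub_pos_of_lt hlt, (Nat.add_sub_of_le hlt.le).trans_le j.is_le, ?_⟩
  rw [Function.IsPeriodicPt, Function.IsFixedPt, ← Function.iterate_add_apply,
    Nat.sub_add_cancel hlt.le]
  exact heq.symm

theorem iterate_add_eq_of_isPeriodicPt {X : Type} {f : X → X} {x : X} {k r s : ℕ}
    (hper : Function.IsPeriodicPt f r (f^[k] x)) (hs : k ≤ s) : f^[s + r] x = f^[s] x := by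
  obtain ⟨u, rfl⟩ := Nat.exists_eq_add_of_le' hs
  rw [Nat.add_comm, Function.iterate_add_apply, Function.iterate_add_apply]
  exact hper.apply_iterate u

variable {M : MDP Q A} {S : Set Q} {k r : ℕ} {α ε : ℝ}

/-- The states, paired with the residue modulo `r` of a number `s ≥ k`, from which one can
surely be in `S` after exactly `s` steps. -/
def syncTarget (M : MDP Q A) (S : Set Q) (k r : ℕ) : Set (Q × ZMod r) :=
  {x | ∃ s ≥ k, (s : ZMod r) = x.2 ∧ x.1 ∈ M.Pre^[s] S}

theorem preimage_syncTarget (hper : Function.IsPeriodicPt M.Pre r (M.Pre^[k] S)) :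
    (·, (k : ZMod r)) ⁻¹' M.syncTarget S k r = M.Pre^[k] S := by
  refine Set.Subset.antisymm ?_ fun q hq => ⟨k, le_rfl, rfl, hq⟩
  rintro q ⟨s, hs, hmod, hq⟩
  obtain ⟨u, rfl⟩ := Nat.exists_eq_add_of_le' hs
  have hdvd : r ∣ u := by
    rw [← ZMod.natCast_eq_zero_iff]
    simpa using hmod
  rw [Function.iterate_add_apply] at hq
  exact (hper.trans_dvd hdvd).eq ▸ hq

variable [NeZero r]

theorem syncTarget_subset_pre (hper : Function.IsPeriodicPt M.Pre r (M.Pre^[k] S)) :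
    M.syncTarget S k r ⊆ (M.clock r).Pre (M.syncTarget S k r) := by
  rintro ⟨q, t⟩ ⟨s, hs, rfl, hq⟩
  have hr := NeZero.pos r
  obtain ⟨u, hu⟩ : ∃ u, s + r = u + 1 := ⟨s + r - 1, by omega⟩
  have hmod : (s : ZMod r) = u + 1 := by
    rw [← Nat.cast_succ, Nat.succ_eq_add_one, ← hu, Nat.cast_add, ZMod.natCast_self, add_zero]
  rw [← iterate_add_eq_of_isPeriodicPt hper hs, hu, Function.iterate_succ_apply'] at hq
  rw [hmod, mem_pre_clock]
  exact hq.imp fun a ha q' hq' => ⟨u, by omega, rfl, ha q' hq'⟩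

/-- From its states in phase `t`, the region `W` allows for `S` to be missed with arbitrarily
small probability after arbitrarily large numbers `s ≡ t` of steps, while surely ending in `S` or
in phase `0` of `W`. -/
def IsSyncRegion (M : MDP Q A) (S : Set Q) (W : Set (Q × ZMod r)) : Prop :=
  ∀ t : ZMod r, ∀ ε > 0, ∀ N : ℕ, ∃ s ≥ N, (s : ZMod r) = t ∧
    (∀ q, (q, t) ∈ W → M.missProb Set.univ S s q ≤ ε) ∧
    ∀ d, IsDist d → supp d ⊆ (·, t) ⁻¹' W → ∃ d', M.CanReach s d d' ∧ IsDist d' ∧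
      supp d' ⊆ S ∪ (·, 0) ⁻¹' W ∧ mass d' Sᶜ ≤ ε

theorem exists_uniform_le_of_tendsto_zero {X : Type} [Finite X] {W : Set X} {f : ℕ → X → ℝ}
    (h : ∀ x ∈ W, Tendsto (fun j => f j x) atTop (𝓝 0)) (hε : 0 < ε) (u : ZMod r) (N : ℕ) :
    ∃ j ≥ N, (j : ZMod r) = u ∧ ∀ x ∈ W, f j x ≤ ε := by
  have hev : ∀ᶠ j in atTop, ∀ x ∈ W, f j x ≤ ε := by
    refine eventually_all.2 fun x => eventually_imp_distrib_left.2 fun hx => ?_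
    exact (h x hx).eventually_le_const hε
  obtain ⟨K, hK⟩ := eventually_atTop.1 hev
  refine ⟨u.val + r * max N K, ?_, by simp, hK _ ?_⟩
  all_goals
    refine le_trans ?_ ((Nat.le_mul_of_pos_left _ (NeZero.pos r)).trans (Nat.le_add_left _ _))
    simp

theorem missProb_univ_le_clock [Nonempty A] {W : Set (Q × ZMod r)}
    (hper : Function.IsPeriodicPt M.Pre r (M.Pre^[k] S)) (hW : W ⊆ (M.clock r).Pre W)
    {q : Q} {j : ℕ} (hq : (q, (j + k : ZMod r)) ∈ W) :
    M.missProb Set.univ S (j + k) q ≤ (M.clock r).missProb W (M.syncTarget S k r) j (q, j + k) :=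
  calc M.missProb Set.univ S (j + k) q ≤ M.missProb Set.univ (M.Pre^[k] S) j q + 0 :=
        missProb_add_le subset_pre_univ le_rfl (fun _ hq' _ => (missProb_univ_eq_zero hq').le)
          (Set.mem_univ q)
    _ = (M.clock r).missProb Set.univ (M.syncTarget S k r) j (q, j + k) := by
        rw [missProb_clock_univ, preimage_syncTarget hper, add_zero]
    _ ≤ _ := missProb_anti (Set.subset_univ W) hW hq

theorem exists_canReach_iterate_pre [Nonempty A] {W : Set (Q × ZMod r)}
    (hper : Function.IsPeriodicPt M.Pre r (M.Pre^[k] S)) (hW : W ⊆ (M.clock r).Pre W) {j : ℕ}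
    (hj : ∀ q, (q, (j + k : ZMod r)) ∈ W →
      (M.clock r).missProb W (M.syncTarget S k r) j (q, j + k) ≤ ε)
    {d : Q → ℝ} (hd : IsDist d) (hsupp : supp d ⊆ (·, (j + k : ZMod r)) ⁻¹' W) :
    ∃ d', M.CanReach j d d' ∧ IsDist d' ∧ supp d' ⊆ (·, (k : ZMod r)) ⁻¹' W ∧
      mass d' (M.Pre^[k] S)ᶜ ≤ ε := by
  obtain ⟨d', hreach, hd', hsupp', hle⟩ := exists_canReach_of_certificate
    (M := M) (D := fun i => (·, (i + k : ZMod r)) ⁻¹' W)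
    (γ := fun i q => (M.clock r).missProb W (M.syncTarget S k r) i (q, i + k))
    (fun i q hq => by
      simp only [Nat.cast_succ, add_right_comm, Set.mem_preimage] at hq ⊢
      obtain ⟨a, ha, heq⟩ := exists_missProb_succ_eq (R := M.syncTarget S k r) (s := i) (hW hq)
      exact ⟨a, allowed_clock.1 ha, (clock_δ_dotProduct _).symm.trans_le heq.ge⟩) j hd hsupp
  simp only [Nat.cast_zero, zero_add] at hsupp' hle
  refine ⟨d', hreach, hd', hsupp', ?_⟩
  rw [mass_eq_dotProduct, ← preimage_syncTarget hper]
  exact hle.trans (hd.dotProduct_le fun q hq => hj q (hsupp hq))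

theorem exists_canReach_of_supp_subset [Nonempty A] {W : Set (Q × ZMod r)}
    (hW : W ⊆ (M.clock r).Pre W) {d : Q → ℝ} (hd : IsDist d)
    (hsupp : supp d ⊆ (·, (k : ZMod r)) ⁻¹' W) :
    ∃ d', M.CanReach k d d' ∧ IsDist d' ∧ supp d' ⊆ S ∪ (·, 0) ⁻¹' W ∧
      mass d' Sᶜ ≤ mass d (M.Pre^[k] S)ᶜ := by
  have hstep : ∀ i, ∀ q ∈ M.Pre^[i + 1] S ∪ (·, ((i + 1 : ℕ) : ZMod r)) ⁻¹' W,
      ∃ a, M.Allowed (M.Pre^[i] S ∪ (·, (i : ZMod r)) ⁻¹' W) q a ∧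
        M.δ q a ⬝ᵥ (M.Pre^[i] S)ᶜ.indicator 1 ≤ (M.Pre^[i + 1] S)ᶜ.indicator 1 q := by
    intro i q hq
    by_cases hpre : q ∈ M.Pre^[i + 1] S
    · obtain ⟨a, ha⟩ := Function.iterate_succ_apply' M.Pre i S ▸ hpre
      refine ⟨a, fun q' hq' => .inl (ha q' hq'), ?_⟩
      rw [Set.indicator_of_notMem (not_not.2 hpre)]
      exact (M.isDist_δ q a).dotProduct_le fun q' hq' =>
        (Set.indicator_of_notMem (not_not.2 (ha q' hq')) 1).le
    · have hqW := hW (hq.resolve_left hpre)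
      rw [Nat.cast_succ, mem_pre_clock] at hqW
      obtain ⟨a, ha⟩ := hqW
      refine ⟨a, fun q' hq' => .inr (ha q' hq'), ?_⟩
      rw [Set.indicator_of_mem (Set.mem_compl hpre)]
      exact (M.isDist_δ q a).dotProduct_le fun q' _ =>
        Set.indicator_le_self' (fun _ _ => zero_le_one) q'
  obtain ⟨d', hreach, hd', hsupp', hle⟩ :=
    exists_canReach_of_certificate (D := fun i => M.Pre^[i] S ∪ (·, (i : ZMod r)) ⁻¹' W)
      hstep k hd (hsupp.trans Set.subset_union_right)
  rw [Nat.cast_zero] at hsupp'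
  refine ⟨d', hreach, hd', hsupp', ?_⟩
  rw [mass_eq_dotProduct, mass_eq_dotProduct]
  exact hle

theorem isSyncRegion_of_tendsto [Nonempty A] {W : Set (Q × ZMod r)}
    (hper : Function.IsPeriodicPt M.Pre r (M.Pre^[k] S)) (hW : W ⊆ (M.clock r).Pre W)
    (hlim : ∀ x ∈ W, Tendsto (fun j => (M.clock r).missProb W (M.syncTarget S k r) j x)
      atTop (𝓝 0)) : M.IsSyncRegion S W := by
  intro t ε hε N
  obtain ⟨j, hjN, hjt, hj⟩ := exists_uniform_le_of_tendsto_zero hlim hε (t - (k : ZMod r)) N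
  obtain rfl : j + k = t := eq_sub_iff_add_eq.1 hjt
  refine ⟨j + k, hjN.trans (Nat.le_add_right j k), Nat.cast_add j k,
    fun q hq => (missProb_univ_le_clock hper hW hq).trans (hj _ hq),
    fun d hd hsupp => ?_⟩
  obtain ⟨d₁, hreach₁, hd₁, hsupp₁, hmass₁⟩ :=
    exists_canReach_iterate_pre hper hW (fun q hq => hj _ hq) hd hsupp
  obtain ⟨d₂, hreach₂, hd₂, hsupp₂, hmass₂⟩ := exists_canReach_of_supp_subset hW hd₁ hsupp₁
  exact ⟨d₂, hreach₁.trans hreach₂, hd₂, hsupp₂, hmass₂.trans hmass₁⟩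

theorem IsTransBound.pow_le_missProb_of_clock [Nonempty A] (hα : M.IsTransBound α)
    (hper : Function.IsPeriodicPt M.Pre r (M.Pre^[k] S)) {q : Q} {j e : ℕ}
    (h : α ^ e ≤ (M.clock r).missProb Set.univ (M.syncTarget S k r) j (q, j + k)) :
    α ^ (k + e) ≤ M.missProb Set.univ S (j + k) q := by
  rw [missProb_clock_univ, preimage_syncTarget hper] at h
  rw [pow_add]
  exact (mul_le_mul_of_nonneg_left h (pow_nonneg hα.pos.le k)).trans
    (mul_missProb_le subset_pre_univ (pow_nonneg hα.pos.le k)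
      (fun q' hq' _ => hα.pow_le_missProb_univ hq') (Set.mem_univ q))

theorem IsTransBound.exists_isSyncRegion [Nonempty Q] [Nonempty A] (hα : M.IsTransBound α)
    (S : Set Q) :
    ∃ (r : ℕ) (_ : NeZero r) (W : Set (Q × ZMod r)), M.IsSyncRegion S W ∧
      ∃ k ≤ 2 ^ Fintype.card Q, ∀ s ≥ k, ∀ q,
        M.missProb Set.univ S s q < α ^ (Fintype.card Q * 2 ^ Fintype.card Q) →
        (q, (s : ZMod r)) ∈ W := by
  obtain ⟨k, r, hr, hkr, hper⟩ := exists_isPeriodicPt_iterate M.Pre S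
  rw [Fintype.card_set] at hkr
  have : NeZero r := ⟨hr.ne'⟩
  obtain ⟨W, hW, hout, hlim⟩ :=
    (hα.clock (r := r)).exists_reach_region (syncTarget_subset_pre hper)
  refine ⟨r, this, W, isSyncRegion_of_tendsto hper hW hlim, k, by omega, fun s hs q hlt => ?_⟩
  obtain ⟨j, rfl⟩ := Nat.exists_eq_add_of_le' hs
  by_contra hq
  rw [Nat.cast_add] at hq
  refine hlt.not_ge (le_trans ?_ (hα.pow_le_missProb_of_clock hper (hout _ hq j)))
  refine pow_le_pow_of_le_one hα.pos.le hα.le_one ?_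
  rw [Fintype.card_prod, ZMod.card]
  calc k + Fintype.card Q * r ≤ Fintype.card Q * k + Fintype.card Q * r :=
        Nat.add_le_add_right (Nat.le_mul_of_pos_left k Fintype.card_pos) _
    _ ≤ Fintype.card Q * 2 ^ Fintype.card Q := by
        rw [← Nat.mul_add]
        exact Nat.mul_le_mul_left _ hkr

end SyncRegion

section WeakSynchronization

variable {M : MDP Q A} {S T : Set Q} {d0 : Q → ℝ} {α : ℝ}

theorem missProb_univ_mul_eq_zero [Nonempty A] {m : ℕ}
    (h : ∀ q ∈ S, M.missProb Set.univ S m q = 0) (j : ℕ) :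
    ∀ q ∈ S, M.missProb Set.univ S (j * m) q = 0 := by
  refine fun q hq => le_antisymm ?_ (missProb_nonneg q)
  induction j generalizing q with
  | zero => exact (Nat.zero_mul m).symm ▸ (missProb_zero_of_mem hq).le
  | succ j ih =>
    rw [Nat.succ_mul]
    exact (missProb_add_le subset_pre_univ le_rfl (fun q' hq' _ => (h q' hq').le)
      (Set.mem_univ q)).trans ((add_zero _).trans_le (ih q hq))

theorem IsSyncRegion.mem_of_missProb_lt [Nonempty A] {r : ℕ} {W : Set (Q × ZMod r)}
    {c : ℝ} {k s : ℕ} {p : ZMod r} {q : Q} (hW : M.IsSyncRegion S W)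
    (hmem : ∀ s ≥ k, ∀ q, M.missProb Set.univ S s q < c → (q, (s : ZMod r)) ∈ W)
    (hS : S ⊆ (·, p) ⁻¹' W) (hq : M.missProb Set.univ S s q < c) : (q, s + p) ∈ W := by
  obtain ⟨b, hqb, hbc⟩ := exists_between hq
  obtain ⟨m, hkm, rfl, hm, -⟩ := hW p (c - b) (sub_pos.2 hbc) k
  rw [← Nat.cast_add]
  refine hmem (s + m) (hkm.trans (Nat.le_add_left m s)) q ?_
  have hadd := missProb_add_le (M := M) (m := s) subset_pre_univ (sub_pos.2 hbc).le
    (fun q' hq' _ => hm q' (hS hq')) (Set.mem_univ q)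
  linarith

theorem IsSyncRegion.asWeakly [Nonempty A] {r : ℕ} {W : Set (Q × ZMod r)}
    (hW : M.IsSyncRegion S W) {p t : ZMod r} (hS : S ⊆ (·, p) ⁻¹' W)
    (h0 : ∀ q, (q, 0) ∈ W → (q, p) ∈ W) (hST : S ⊆ T) (hd0 : IsDist d0)
    (hsupp : supp d0 ⊆ (·, t) ⁻¹' W) : M.ASWeakly d0 T := by
  refine asWeakly_of_forall_canReach (fun d => IsDist d ∧ ∃ t : ZMod r, supp d ⊆ (·, t) ⁻¹' W)
    ⟨hd0, t, hsupp⟩ ?_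
  rintro d ⟨hd, t, hdt⟩ ε hε
  obtain ⟨n, hn, -, -, hreach⟩ := hW t ε hε 1
  obtain ⟨d', hdd', hd', hsupp', hmass⟩ := hreach d hd hdt
  refine ⟨n, hn, d', hdd', ⟨hd', p, hsupp'.trans (Set.union_subset hS h0)⟩, ?_⟩
  linarith [hd'.mass_add_mass_compl S, mass_mono hd'.1 hST]

theorem IsTransBound.asWeakly_of_missProb_lt [Nonempty Q] [Nonempty A] (hα : M.IsTransBound α)
    (hd0 : IsDist d0) (hST : S ⊆ T) {i m : ℕ} (hm : 0 < m)
    (hS : ∀ q ∈ S, M.missProb Set.univ S m q < α ^ (Fintype.card Q * 2 ^ Fintype.card Q))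
    (hi : ∀ q ∈ supp d0,
      M.missProb Set.univ S i q < α ^ (Fintype.card Q * 2 ^ Fintype.card Q)) :
    M.ASWeakly d0 T := by
  obtain ⟨r, _, W, hW, k, hk, hmem⟩ := hα.exists_isSyncRegion S
  have hpos : 0 < α ^ (Fintype.card Q * 2 ^ Fintype.card Q) := pow_pos hα.pos _
  obtain ⟨p, hSp⟩ : ∃ p : ZMod r, S ⊆ (·, p) ⁻¹' W := by
    -- If `m < k`, returning to `S` after `m` steps is so likely that it must be sure, and can then
    -- be repeated `k` times.
    rcases le_or_gt k m with hkm | hmk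
    · exact ⟨m, fun q hq => hmem m hkm q (hS q hq)⟩
    have hexp : m ≤ Fintype.card Q * 2 ^ Fintype.card Q :=
      (hmk.le.trans hk).trans (Nat.le_mul_of_pos_left _ Fintype.card_pos)
    have hzero : ∀ q ∈ S, M.missProb Set.univ S m q = 0 := fun q hq => by
      by_contra hne
      have hpre : q ∉ M.Pre^[m] S := fun hpre => hne (missProb_univ_eq_zero hpre)
      exact (hS q hq).not_ge ((pow_le_pow_of_le_one hα.pos.le hα.le_one hexp).trans
        (hα.pow_le_missProb_univ hpre))
    refine ⟨(k * m : ℕ), fun q hq => hmem _ (Nat.le_mul_of_pos_right k hm) q ?_⟩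
    rwa [missProb_univ_mul_eq_zero hzero k q hq]
  have h0 : ∀ q, (q, 0) ∈ W → (q, p) ∈ W := fun q hq => by
    obtain ⟨s, -, hs, hmiss, -⟩ := hW 0 _ (half_pos hpos) 0
    have := hW.mem_of_missProb_lt hmem hSp ((hmiss q hq).trans_lt (half_lt_self hpos))
    rwa [hs, zero_add] at this
  exact hW.asWeakly hSp h0 hST hd0 fun q hq => hW.mem_of_missProb_lt hmem hSp (hi q hq)

end WeakSynchronization

section Counting

variable {M : MDP Q A} {S T : Set Q} {σ : List (Q × A) → Q → A → ℝ} {d0 : Q → ℝ} {α α0 : ℝ}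

theorem missProb_univ_lt_of_mass_lt (hσ : IsStrategy σ) (hd0 : IsDist d0) {i m : ℕ} {q : Q}
    {c x : ℝ} (hx : 0 < x) (hq : x ≤ M.stepDist σ d0 i q)
    (hmass : mass (M.stepDist σ d0 (i + m)) Sᶜ < c * x) : M.missProb Set.univ S m q < c := by
  refine lt_of_mul_lt_mul_right (lt_of_le_of_lt ?_ hmass) hx.le
  calc M.missProb Set.univ S m q * x ≤ M.stepDist σ d0 i q * M.missProb Set.univ S m q := by
        rw [mul_comm]
        exact mul_le_mul_of_nonneg_right hq (missProb_nonneg q)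
    _ ≤ M.stepDist σ d0 i ⬝ᵥ M.missProb Set.univ S m :=
        mul_le_dotProduct (M.isDist_stepDist hσ hd0 i).1 missProb_nonneg q
    _ ≤ mass (M.stepDist σ d0 (i + m)) Sᶜ := stepDist_dotProduct_missProb_le hσ hd0.1 i m

theorem IsTransBound.asWeakly_of_stepDist [Nonempty Q] [Nonempty A] (hα : M.IsTransBound α)
    (hσ : IsStrategy σ) (hd0 : IsDist d0) (hα0 : ∀ q ∈ supp d0, α0 ≤ d0 q) {i j : ℕ} {x : ℝ}
    (hij : i < j) (hx : 0 < x) (hxα0 : x ≤ α0) (hS : ∀ q ∈ S, x ≤ M.stepDist σ d0 i q)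
    (hST : S ⊆ T)
    (hmass : mass (M.stepDist σ d0 j) Sᶜ < α ^ (Fintype.card Q * 2 ^ Fintype.card Q) * x) :
    M.ASWeakly d0 T := by
  refine hα.asWeakly_of_missProb_lt hd0 hST (Nat.sub_pos_of_lt hij) (i := j) (fun q hq => ?_)
    fun q hq => ?_
  · refine missProb_univ_lt_of_mass_lt hσ hd0 hx (hS q hq) ?_
    rwa [Nat.add_sub_of_le hij.le]
  · refine missProb_univ_lt_of_mass_lt hσ hd0 (i := 0) hx ?_ ?_
    · rw [stepDist_zero]
      exact hxα0.trans (hα0 q hq)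
    · rwa [Nat.zero_add]

theorem IsDist.setOf_le_subset {d : Q → ℝ} (hd : IsDist d) {x : ℝ} (h : 1 - x < mass d T) :
    {q | x ≤ d q} ⊆ T := by
  intro q hq
  by_contra hqT
  have hqmass : x ≤ mass d Tᶜ := le_trans hq (le_mass_of_mem hd.1 (Set.mem_compl hqT))
  linarith [hd.mass_add_mass_compl T]

theorem exists_lt_mass_compl_setOf_le_lt [Nonempty Q] {η : ℕ → ℝ} (hη : ∀ j, 0 < η j)
    (d : Fin (2 ^ Fintype.card Q + 1) → Q → ℝ) :
    ∃ j l, j < l ∧ mass (d l) {q | η j ≤ d j q}ᶜ < Fintype.card Q * η l := by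
  obtain ⟨j, l, hlt, hjl⟩ := exists_lt_map_eq_of_card_lt
    (fun j : Fin (2 ^ Fintype.card Q + 1) => {q | η j ≤ d j q}) (by simp)
  exact ⟨j, l, hlt, hjl ▸ mass_compl_setOf_le_lt (d l) (hη l)⟩

theorem IsTransBound.asWeakly_of_strictMono [Nonempty Q] [Nonempty A] (hα : M.IsTransBound α)
    (hσ : IsStrategy σ) (hd0 : IsDist d0) (hα0_pos : 0 < α0) (hα0 : ∀ q ∈ supp d0, α0 ≤ d0 q)
    {e : Fin (2 ^ Fintype.card Q + 1) → ℕ} (he : StrictMono e)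
    (hmass : ∀ j, 1 - α0 * (α ^ (Fintype.card Q * 2 ^ Fintype.card Q) / Fintype.card Q) ^
      (2 ^ Fintype.card Q + 1) < mass (M.stepDist σ d0 (e j)) T) :
    M.ASWeakly d0 T := by
  have hn : (1 : ℝ) ≤ Fintype.card Q := by exact_mod_cast Fintype.card_pos (α := Q)
  set c := α ^ (Fintype.card Q * 2 ^ Fintype.card Q)
  have hc : 0 < c := pow_pos hα.pos _
  -- The ratio `c / n` makes the states below level `η (l + 1)` weigh less than `c * η l` in total.
  let η (j : ℕ) : ℝ := α0 * (c / Fintype.card Q) ^ j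
  have hη_pos (j : ℕ) : 0 < η j := by positivity
  have hη_succ (j : ℕ) : Fintype.card Q * η (j + 1) = c * η j := by
    calc Fintype.card Q * η (j + 1)
        = Fintype.card Q * (c / Fintype.card Q) * (α0 * (c / Fintype.card Q) ^ j) := by ring
      _ = c * η j := by rw [mul_div_cancel₀ c (zero_lt_one.trans_le hn).ne']
  have hη : Antitone η := fun j l hjl =>
    mul_le_mul_of_nonneg_left (pow_le_pow_of_le_one (by positivity)
      (div_le_one_of_le₀ ((pow_le_one₀ hα.pos.le hα.le_one).trans hn) (by positivity)) hjl)
      hα0_pos.le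
  obtain ⟨j, l, hlt, hS⟩ := exists_lt_mass_compl_setOf_le_lt (η := fun j => η (j + 1))
    (fun j => hη_pos (j + 1)) fun j => M.stepDist σ d0 (e j)
  have hST : {q | η (j + 1) ≤ M.stepDist σ d0 (e j) q} ⊆ T := by
    refine (M.isDist_stepDist hσ hd0 (e j)).setOf_le_subset (lt_of_le_of_lt ?_ (hmass j))
    exact sub_le_sub_left (hη (Nat.succ_le_succ j.is_le)) 1
  have hSmass : Fintype.card Q * η (l + 1) ≤ c * η (j + 1) :=
    (hη_succ l).trans_le (mul_le_mul_of_nonneg_left (hη (Nat.succ_le_of_lt hlt)) hc.le)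
  have hηα0 : η (j + 1) ≤ α0 := (hη (Nat.zero_le _)).trans_eq (by simp [η])
  exact hα.asWeakly_of_stepDist hσ hd0 hα0 (he hlt) (hη_pos (j + 1)) hηα0 (fun _ hq => hq) hST
    (hS.trans_le hSmass)

theorem weakEpsilon_le_threshold (n : ℕ) (hα0 : 0 ≤ α0) (hα : 0 ≤ α) (hα1 : α ≤ 1) :
    α0 * α ^ ((n + 2) * 4 ^ n) / (n : ℝ) ^ (2 ^ n + 1) ≤
      α0 * (α ^ (n * 2 ^ n) / n) ^ (2 ^ n + 1) := by
  have hexp : n * 2 ^ n * (2 ^ n + 1) ≤ (n + 2) * 4 ^ n := by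
    have hsq : 4 ^ n = 2 ^ n * 2 ^ n := Nat.mul_pow 2 2 n
    have hn2 : n * 2 ^ n ≤ 2 ^ n * 2 ^ n := Nat.mul_le_mul_right _ Nat.lt_two_pow_self.le
    calc n * 2 ^ n * (2 ^ n + 1) = n * 4 ^ n + n * 2 ^ n := by rw [hsq]; ring
      _ ≤ (n + 2) * 4 ^ n := by rw [Nat.add_mul]; omega
  rw [div_pow, ← pow_mul, mul_div_assoc]
  have := pow_le_pow_of_le_one hα hα1 hexp
  gcongr

theorem exists_finset_card_le_of_forall_not_strictMono {I : Set ℕ} {N : ℕ}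
    (h : ∀ e : Fin (N + 1) → ℕ, StrictMono e → ∃ j, e j ∉ I) :
    ∃ s : Finset ℕ, s.card ≤ N ∧ ∀ i ∈ I, i ∈ s := by
  have hcard : I.encard ≤ N := by
    by_contra! hlt
    obtain ⟨J, hJI, hJ⟩ := Set.exists_subset_encard_eq (Order.add_one_le_of_lt hlt)
    have hfin : J.Finite := Set.finite_of_encard_eq_coe (k := N + 1) (by exact_mod_cast hJ)
    have hJcard : hfin.toFinset.card = N + 1 := by
      have := hfin.encard_eq_coe_toFinset_card
      rw [hJ] at this
      exact_mod_cast this.symm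
    obtain ⟨j, hj⟩ := h (hfin.toFinset.orderEmbOfFin hJcard) (OrderEmbedding.strictMono _)
    exact hj (hJI (hfin.mem_toFinset.1 (Finset.orderEmbOfFin_mem _ hJcard j)))
  have hfin : I.Finite := Set.finite_of_encard_le_coe hcard
  refine ⟨hfin.toFinset, ?_, fun i hi => hfin.mem_toFinset.2 hi⟩
  rw [hfin.encard_eq_coe_toFinset_card] at hcard
  exact_mod_cast hcard

end Counting

end MDP

open MDP in
/-- If `d0` is not almost-sure weakly synchronizing in `T`, then for every
strategy at most `N_w = 2^n` distributions in `(M^σ_i)` are strictly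
`(1 - ε_w)`-synchronized in `T`, where
`ε_w = α0 * α^((n+2)·4^n) / n^(2^n + 1)`. -/
theorem stmt5 {Q A : Type} [Fintype Q] [Fintype A] (M : MDP Q A)
    (d0 : Q → ℝ) (hd0 : IsDist d0) (T : Set Q) (α α0 : ℝ)
    (hn : 2 ≤ Fintype.card Q)
    (hα : IsLeast {x : ℝ | 0 < x ∧ ∃ q a q', M.δ q a q' = x} α)
    (hα0 : IsLeast {x : ℝ | 0 < x ∧ ∃ q, d0 q = x} α0)
    (h : ¬ M.ASWeakly d0 T) :
    ∀ σ, IsStrategy σ → ∃ s : Finset ℕ, s.card ≤ 2 ^ Fintype.card Q ∧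
      ∀ i : ℕ,
        1 - α0 * α ^ ((Fintype.card Q + 2) * 4 ^ Fintype.card Q) /
            (Fintype.card Q : ℝ) ^ (2 ^ Fintype.card Q + 1)
          < mass (M.stepDist σ d0 i) T → i ∈ s := by
  intro σ hσ
  have : Nonempty Q := Fintype.card_pos_iff.1 (by omega)
  have hα_le {q a q'} (hpos : 0 < M.δ q a q') : α ≤ M.δ q a q' := hα.2 ⟨hpos, q, a, q', rfl⟩
  obtain ⟨hα_pos, q, a, q', hq'⟩ := hα.1
  have : Nonempty A := ⟨a⟩
  have hα_le_one : α ≤ 1 := hq' ▸ (Finset.single_le_sum (fun x _ => M.δ_nonneg q a x)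
    (Finset.mem_univ q')).trans_eq (M.δ_sum q a)
  have hbound : M.IsTransBound α := ⟨hα_pos, hα_le_one, hα_le⟩
  refine exists_finset_card_le_of_forall_not_strictMono (fun e he => ?_)
  by_contra! hmass
  refine h (hbound.asWeakly_of_strictMono hσ hd0 hα0.1.1 (fun q hq => hα0.2 ⟨hq, q, rfl⟩) he
    fun j => lt_of_le_of_lt ?_ (hmass j))
  linarith [weakEpsilon_le_threshold (Fintype.card Q) hα0.1.1.le hα_pos.le hα_le_one]
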